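/- Suppose (a_n)_{n≥1} are nonnegative reals with ∑ a_n x^n convergent for |x| < 1, and for some α, A ≥ 0 we have ∑_{n=1}^∞ a_n x^n ~ A/(1-x)^α as x ↑ 1. Then ∑_{k=1}^n a_k ~ (A/Γ(α+1))·n^α as n → ∞. -/

import Mathlib

open Filter Real

/-!
With `x = e^{-s}` and `μ = ∑ aₙ δₙ`, the hypothesis says that the Laplace transform of `μ` is
asymptotic to `A s^{-α}` as `s ↓ 0`, and the conclusion is about `μ(Iic x)` as `x → ∞`. Push the
measure `s ^ α e^{-st} dμ(t)` forward along `t ↦ e^{-st}` to a measure on `[0, 1]`: its moments are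
values of the Laplace transform at multiples of `s`, so they converge to the moments of `A` times
the corresponding image of `t ^ (α - 1) / Γ(α) dt` (of `δ₀` when `α = 0`). By Weierstrass
approximation this is weak convergence. The limit has no atom at `e⁻¹`, so integrating `u⁻¹` over
`[e⁻¹, ∞)`, which removes the weight `e^{-st}`, also passes to the limit and gives
`s ^ α μ(Iic s⁻¹) → A ∫₀¹ t ^ (α - 1) / Γ(α) dt = A / Γ(α + 1)`.
-/

open MeasureTheory Set
open scoped ENNReal NNReal Topology BoundedContinuousFunction

section WeakConvergence

variable {ι : Type*} {l : Filter ι}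

lemma integrable_of_continuous_of_ae_mem_isCompact {X E : Type*} [TopologicalSpace X] [T2Space X]
    [MeasurableSpace X] [OpensMeasurableSpace X] [NormedAddCommGroup E]
    {μ : Measure X} [IsFiniteMeasureOnCompacts μ] {K : Set X}
    (hK : IsCompact K) (hμ : ∀ᵐ x ∂μ, x ∈ K) {f : X → E} (hf : Continuous f) :
    Integrable f μ := by
  rw [← Measure.restrict_eq_self_of_ae_mem hμ]
  exact hf.continuousOn.integrableOn_compact hK

variable {a b : ℝ} {ν : ι → FiniteMeasure ℝ} {ν₀ : FiniteMeasure ℝ}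

lemma integral_polynomial_eq_sum_moments {μ : Measure ℝ} [IsFiniteMeasure μ]
    (hμ : ∀ᵐ x ∂μ, x ∈ Icc a b) (p : Polynomial ℝ) :
    ∫ x, p.eval x ∂μ = ∑ k ∈ Finset.range (p.natDegree + 1), p.coeff k * ∫ x, x ^ k ∂μ := by
  simp only [Polynomial.eval_eq_sum_range, ← integral_const_mul]
  exact integral_finsetSum _ fun k _ ↦
    integrable_of_continuous_of_ae_mem_isCompact isCompact_Icc hμ (by fun_prop)

lemma abs_integral_sub_integral_le {X : Type*} [MeasurableSpace X] {μ : Measure X}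
    [IsFiniteMeasure μ] {f g : X → ℝ} (hf : Integrable f μ) (hg : Integrable g μ) {ε : ℝ}
    (h : ∀ᵐ x ∂μ, |f x - g x| ≤ ε) : |∫ x, f x ∂μ - ∫ x, g x ∂μ| ≤ ε * μ.real univ := by
  rw [← integral_sub hf hg]
  exact norm_integral_le_of_norm_le_const (f := fun x ↦ f x - g x) h

theorem tendsto_finiteMeasure_of_tendsto_moments
    (hν : ∀ i, ∀ᵐ x ∂(ν i : Measure ℝ), x ∈ Icc a b) (hν₀ : ∀ᵐ x ∂(ν₀ : Measure ℝ), x ∈ Icc a b)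
    (h : ∀ k : ℕ, Tendsto (fun i ↦ ∫ x, x ^ k ∂(ν i : Measure ℝ)) l
      (𝓝 (∫ x, x ^ k ∂(ν₀ : Measure ℝ)))) :
    Tendsto ν l (𝓝 ν₀) := by
  refine FiniteMeasure.tendsto_of_forall_integral_tendsto fun f ↦ ?_
  have hmass : Tendsto (fun i ↦ (ν i : Measure ℝ).real univ) l
      (𝓝 ((ν₀ : Measure ℝ).real univ)) := by simpa using h 0
  set m := (ν₀ : Measure ℝ).real univ
  have hm : 0 ≤ m := measureReal_nonneg
  refine Metric.tendsto_nhds.2 fun ε hε ↦ ?_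
  obtain ⟨p, hp⟩ := exists_polynomial_near_of_continuousOn a b f f.continuous.continuousOn
    (ε / (4 * (m + 1))) (by positivity)
  have hclose {μ : Measure ℝ} [IsFiniteMeasure μ] (hμ : ∀ᵐ x ∂μ, x ∈ Icc a b)
      (hμm : μ.real univ ≤ m + 1) : |∫ x, p.eval x ∂μ - ∫ x, f x ∂μ| ≤ ε / 4 := calc
    _ ≤ ε / (4 * (m + 1)) * μ.real univ := abs_integral_sub_integral_le
        (integrable_of_continuous_of_ae_mem_isCompact isCompact_Icc hμ p.continuous)
        (f.integrable μ) (hμ.mono fun x hx ↦ (hp x hx).le)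
    _ ≤ ε / (4 * (m + 1)) * (m + 1) := by gcongr
    _ = ε / 4 := by field_simp
  have hpoly : Tendsto (fun i ↦ ∫ x, p.eval x ∂(ν i : Measure ℝ)) l
      (𝓝 (∫ x, p.eval x ∂(ν₀ : Measure ℝ))) := by
    simp only [integral_polynomial_eq_sum_moments (hν _), integral_polynomial_eq_sum_moments hν₀]
    exact tendsto_finsetSum _ fun k _ ↦ (h k).const_mul _
  filter_upwards [hmass.eventually_le_const (lt_add_one m),
    Metric.tendsto_nhds.1 hpoly (ε / 2) (by positivity)] with i hi hpi
  have h₁ := hclose (hν i) hi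
  have h₂ := hclose hν₀ (lt_add_one m).le
  rw [Real.dist_eq] at hpi ⊢
  grind

variable {X : Type*} [MeasurableSpace X] [TopologicalSpace X] [OpensMeasurableSpace X]
  {μ : ι → FiniteMeasure X} {μ₀ : FiniteMeasure X}

theorem tendsto_finiteMeasure_apply_of_null_frontier [HasOuterApproxClosed X]
    (h : Tendsto μ l (𝓝 μ₀)) {E : Set X} (hE : μ₀ (frontier E) = 0) :
    Tendsto (fun i ↦ μ i E) l (𝓝 (μ₀ E)) := by
  rcases eq_or_ne μ₀ 0 with rfl | hμ₀
  · have hmass : Tendsto (fun i ↦ (μ i).mass) l (𝓝 0) := by simpa using h.mass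
    exact tendsto_of_tendsto_of_tendsto_of_le_of_le tendsto_const_nhds hmass
      (fun _ ↦ zero_le) fun i ↦ (μ i).apply_mono (subset_univ E)
  have : Nonempty X := by
    by_contra hX
    rw [not_nonempty_iff] at hX
    exact hμ₀ (FiniteMeasure.toMeasure_injective (Subsingleton.elim _ _))
  have hE' : μ₀.normalize (frontier E) = 0 := by
    rw [μ₀.normalize_eq_of_nonzero hμ₀, hE, mul_zero]
  simp only [FiniteMeasure.self_eq_mass_mul_normalize _ E]
  exact h.mass.mul (ProbabilityMeasure.tendsto_measure_of_null_frontier_of_tendsto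
    (FiniteMeasure.tendsto_normalize_of_tendsto h hμ₀) hE')

theorem tendsto_setLIntegral_of_null_frontier [HasOuterApproxClosed X] (h : Tendsto μ l (𝓝 μ₀))
    (g : X →ᵇ ℝ≥0) {E : Set X} (hEm : MeasurableSet E) (hE : μ₀ (frontier E) = 0) :
    Tendsto (fun i ↦ ∫⁻ x in E, g x ∂(μ i : Measure X)) l
      (𝓝 (∫⁻ x in E, g x ∂(μ₀ : Measure X))) := by
  let weighted (κ : FiniteMeasure X) : FiniteMeasure X :=
    ⟨(κ : Measure X).withDensity fun x ↦ g x,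
      isFiniteMeasure_withDensity (g.lintegral_lt_top_of_nnreal κ).ne⟩
  have hg : Measurable fun x ↦ (g x : ℝ≥0∞) := g.continuous.measurable.coe_nnreal_ennreal
  have hweak : Tendsto (fun i ↦ weighted (μ i)) l (𝓝 (weighted μ₀)) := by
    rw [FiniteMeasure.tendsto_iff_forall_lintegral_tendsto] at h ⊢
    intro f
    have hf : Measurable fun x ↦ (f x : ℝ≥0∞) := f.continuous.measurable.coe_nnreal_ennreal
    simpa [weighted, lintegral_withDensity_eq_lintegral_mul _ hg hf] using h (g * f)
  have hnull : weighted μ₀ (frontier E) = 0 := by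
    rw [FiniteMeasure.null_iff_toMeasure_null] at hE ⊢
    exact withDensity_absolutelyContinuous _ _ hE
  have hweighted (κ : FiniteMeasure X) : (weighted κ E : ℝ≥0∞) = ∫⁻ x in E, g x ∂κ := by
    rw [FiniteMeasure.ennreal_coeFn_eq_coeFn_toMeasure]
    exact withDensity_apply _ hEm
  simp only [← hweighted]
  exact ENNReal.tendsto_coe.2 (tendsto_finiteMeasure_apply_of_null_frontier hweak hnull)

end WeakConvergence

section ExpImage

/-- The image of `e^{-st} dμ(t)` under `t ↦ e^{-st}`. If `μ` lives on `[0, ∞)`, it is a measure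
on `[0, 1]` whose moments are the values of the Laplace transform of `μ` at the positive multiples
of `s`. -/
noncomputable def expImage (μ : Measure ℝ) (s : ℝ) : Measure ℝ :=
  (μ.withDensity fun t ↦ .ofReal (exp (-(s * t)))).map fun t ↦ exp (-(s * t))

variable {μ : Measure ℝ} {s : ℝ}

lemma integral_pow_expImage (μ : Measure ℝ) (s : ℝ) (k : ℕ) :
    ∫ u, u ^ k ∂(expImage μ s) = ∫ t, exp (-((k + 1) * s * t)) ∂μ := by
  rw [expImage, integral_map (by fun_prop) (by fun_prop),
    integral_withDensity_eq_integral_toReal_smul (by fun_prop) (by simp)]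
  congr with t
  rw [ENNReal.toReal_ofReal (exp_pos _).le, smul_eq_mul, ← exp_nat_mul, ← exp_add]
  ring_nf

lemma isFiniteMeasure_expImage (h : Integrable (fun t ↦ exp (-(s * t))) μ) :
    IsFiniteMeasure (expImage μ s) := by
  have := isFiniteMeasure_withDensity_ofReal h.hasFiniteIntegral
  exact Measure.isFiniteMeasure_map _ _

lemma ae_mem_Icc_expImage (hμ : ∀ᵐ t ∂μ, 0 ≤ t) (hs : 0 ≤ s) :
    ∀ᵐ u ∂(expImage μ s), u ∈ Icc (0 : ℝ) 1 := by
  refine (ae_map_iff (by fun_prop) measurableSet_Icc).2 ?_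
  filter_upwards [withDensity_absolutelyContinuous _ _ hμ] with t ht
  exact ⟨(exp_pos _).le, exp_le_one_iff.2 (neg_nonpos.2 (mul_nonneg hs ht))⟩

lemma expImage_singleton_exp_neg_one (hs : s ≠ 0) (hμ : μ {s⁻¹} = 0) :
    expImage μ s {exp (-1)} = 0 := by
  have hpre : (fun t ↦ exp (-(s * t))) ⁻¹' {exp (-1)} = {s⁻¹} := by
    ext t
    simp [← mul_eq_one_iff_eq_inv₀ hs, mul_comm]
  rw [expImage, Measure.map_apply (by fun_prop) (measurableSet_singleton _), hpre]
  exact withDensity_absolutelyContinuous _ _ hμ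

/-- The function `1 / u` on `[e⁻¹, ∞)`, extended by a constant to the left; it undoes the weight
`e^{-st}` of `expImage μ s` on the image of `[0, s⁻¹]`. -/
noncomputable def truncatedInv : ℝ →ᵇ ℝ≥0 :=
  (BoundedContinuousFunction.ofNormedAddCommGroup (fun u : ℝ ↦ (max u (exp (-1)))⁻¹)
    (Continuous.inv₀ (by fun_prop) fun u ↦ (lt_max_of_lt_right (exp_pos _)).ne') (exp (-1))⁻¹
    fun u ↦ by
      have hpos : 0 < max u (exp (-1)) := lt_max_of_lt_right (exp_pos _)
      rw [norm_of_nonneg (inv_nonneg.2 hpos.le)]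
      gcongr
      exact le_max_right _ _).nnrealPart

lemma truncatedInv_apply_of_le {u : ℝ} (hu : exp (-1) ≤ u) :
    (truncatedInv u : ℝ≥0∞) = .ofReal u⁻¹ := by
  simp [truncatedInv, ENNReal.ofReal, hu]

lemma setLIntegral_truncatedInv_expImage (hs : 0 < s) :
    ∫⁻ u in Ici (exp (-1)), truncatedInv u ∂(expImage μ s) = μ (Iic s⁻¹) := by
  have hle (t : ℝ) : exp (-1) ≤ exp (-(s * t)) ↔ t ≤ s⁻¹ := by
    rw [exp_le_exp, neg_le_neg_iff, ← one_div, le_div_iff₀' hs]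
  have hmeas : Measurable fun u ↦ (truncatedInv u : ℝ≥0∞) :=
    truncatedInv.continuous.measurable.coe_nnreal_ennreal
  have hpre : (fun t ↦ exp (-(s * t))) ⁻¹' Ici (exp (-1)) = Iic s⁻¹ := ext hle
  rw [expImage, setLIntegral_map measurableSet_Ici hmeas (by fun_prop), hpre,
    setLIntegral_withDensity_eq_setLIntegral_mul _ (by fun_prop)
      (by fun_prop : Measurable fun t ↦ (truncatedInv (exp (-(s * t))) : ℝ≥0∞))
      measurableSet_Iic, ← setLIntegral_one]
  refine setLIntegral_congr_fun measurableSet_Iic fun t ht ↦ ?_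
  simp only [Pi.mul_apply]
  rw [truncatedInv_apply_of_le ((hle t).2 ht), ← ENNReal.ofReal_mul (exp_pos _).le,
    mul_inv_cancel₀ (exp_pos _).ne', ENNReal.ofReal_one]

end ExpImage

section RiemannLiouville

/-- The measure on `[0, ∞)` with Laplace transform `s ^ (-α)`, namely `t ^ (α - 1) / Γ(α) dt` for
`0 < α` and the Dirac mass at `0` for `α = 0`. It is the scaling limit in Karamata's theorem. -/
noncomputable def riemannLiouvilleMeasure (α : ℝ) : Measure ℝ :=
  if α = 0 then .dirac 0
  else (volume.restrict (Ioi 0)).withDensity fun t ↦ .ofReal (t ^ (α - 1) / Gamma α)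

variable {α : ℝ}

lemma riemannLiouvilleMeasure_zero : riemannLiouvilleMeasure 0 = .dirac 0 := if_pos rfl

lemma riemannLiouvilleMeasure_of_ne_zero (hα : α ≠ 0) : riemannLiouvilleMeasure α =
    (volume.restrict (Ioi 0)).withDensity fun t ↦ .ofReal (t ^ (α - 1) / Gamma α) := if_neg hα

lemma ae_nonneg_riemannLiouvilleMeasure (α : ℝ) : ∀ᵐ t ∂(riemannLiouvilleMeasure α), 0 ≤ t := by
  rcases eq_or_ne α 0 with rfl | hα
  · rw [riemannLiouvilleMeasure_zero, ae_dirac_iff measurableSet_Ici]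
  · rw [riemannLiouvilleMeasure_of_ne_zero hα]
    refine withDensity_absolutelyContinuous _ _ ?_
    filter_upwards [ae_restrict_mem measurableSet_Ioi] with t ht using le_of_lt ht

lemma integral_exp_neg_mul_riemannLiouvilleMeasure (hα : 0 ≤ α) {s : ℝ} (hs : 0 < s) :
    ∫ t, exp (-(s * t)) ∂(riemannLiouvilleMeasure α) = s ^ (-α) := by
  rcases hα.eq_or_lt with rfl | hα
  · simp [riemannLiouvilleMeasure_zero]
  have : 0 < Gamma α := Gamma_pos_of_pos hα
  rw [riemannLiouvilleMeasure_of_ne_zero hα.ne',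
    integral_withDensity_eq_integral_toReal_smul (by fun_prop) (by simp)]
  calc
    _ = ∫ t in Ioi 0, (Gamma α)⁻¹ * (t ^ (α - 1) * exp (-(s * t))) := by
      refine setIntegral_congr_fun measurableSet_Ioi fun t (ht : 0 < t) ↦ ?_
      rw [smul_eq_mul, ENNReal.toReal_ofReal (by positivity)]
      ring
    _ = s ^ (-α) := by
      rw [integral_const_mul, integral_rpow_mul_exp_neg_mul_Ioi hα hs, one_div, inv_rpow hs.le,
        rpow_neg hs.le]
      field_simp

lemma integrable_exp_neg_mul_riemannLiouvilleMeasure (hα : 0 ≤ α) {s : ℝ} (hs : 0 < s) :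
    Integrable (fun t ↦ exp (-(s * t))) (riemannLiouvilleMeasure α) := by
  refine not_imp_comm.1 integral_undef ?_
  rw [integral_exp_neg_mul_riemannLiouvilleMeasure hα hs]
  exact (rpow_pos_of_pos hs _).ne'

lemma riemannLiouvilleMeasure_singleton {t : ℝ} (ht : t ≠ 0) :
    riemannLiouvilleMeasure α {t} = 0 := by
  rcases eq_or_ne α 0 with rfl | hα
  · simp [riemannLiouvilleMeasure_zero, ht.symm]
  · rw [riemannLiouvilleMeasure_of_ne_zero hα]
    exact withDensity_absolutelyContinuous _ _ (measure_singleton t)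

lemma riemannLiouvilleMeasure_Iic (hα : 0 ≤ α) {x : ℝ} (hx : 0 ≤ x) :
    riemannLiouvilleMeasure α (Iic x) = .ofReal (x ^ α / Gamma (α + 1)) := by
  rcases hα.eq_or_lt with rfl | hα
  · simp [riemannLiouvilleMeasure_zero, hx]
  have : 0 < Gamma α := Gamma_pos_of_pos hα
  have hint : IntegrableOn (fun t : ℝ ↦ t ^ (α - 1) / Gamma α) (Ioc 0 x) :=
    ((intervalIntegrable_iff_integrableOn_Ioc_of_le hx).1
      (intervalIntegral.intervalIntegrable_rpow' (by linarith))).div_const _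
  rw [riemannLiouvilleMeasure_of_ne_zero hα.ne', withDensity_apply _ measurableSet_Iic,
    Measure.restrict_restrict measurableSet_Iic, inter_comm, Ioi_inter_Iic,
    ← ofReal_integral_eq_lintegral_ofReal hint, integral_div,
    ← intervalIntegral.integral_of_le hx, integral_rpow (.inl (by linarith)), Gamma_add_one hα.ne']
  · rw [sub_add_cancel, zero_rpow hα.ne', sub_zero]
    field_simp
  · filter_upwards [ae_restrict_mem measurableSet_Ioc] with t ht
    have := ht.1
    simp only [Pi.zero_apply]
    positivity

end RiemannLiouville
section Karamata

variable {μ : Measure ℝ} {α A : ℝ}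

lemma tendsto_rpow_mul_moment_expImage (hα : 0 ≤ α)
    (h : Tendsto (fun s ↦ s ^ α * ∫ t, exp (-(s * t)) ∂μ) (𝓝[>] 0) (𝓝 A)) (k : ℕ) :
    Tendsto (fun s ↦ s ^ α * ∫ u, u ^ k ∂(expImage μ s)) (𝓝[>] 0)
      (𝓝 (A * ∫ u, u ^ k ∂(expImage (riemannLiouvilleMeasure α) 1))) := by
  have hk : (0 : ℝ) < k + 1 := by positivity
  have hscale : Tendsto (fun s : ℝ ↦ (k + 1) * s) (𝓝[>] 0) (𝓝[>] 0) := by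
    refine tendsto_nhdsWithin_iff.2 ⟨?_, ?_⟩
    · exact ((continuous_const_mul (k + 1 : ℝ)).tendsto' 0 0 (mul_zero _)).mono_left
        nhdsWithin_le_nhds
    · filter_upwards [self_mem_nhdsWithin] with s hs using mul_pos hk hs
  rw [integral_pow_expImage, mul_one, integral_exp_neg_mul_riemannLiouvilleMeasure hα hk]
  refine ((h.comp hscale).mul_const ((k + 1 : ℝ) ^ (-α))).congr' ?_
  filter_upwards [self_mem_nhdsWithin] with s (hs : 0 < s)
  rw [integral_pow_expImage, Function.comp_apply, mul_rpow hk.le hs.le, rpow_neg hk.le]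
  field_simp

lemma nonneg_of_tendsto_rpow_mul_integral_exp_neg
    (h : Tendsto (fun s ↦ s ^ α * ∫ t, exp (-(s * t)) ∂μ) (𝓝[>] 0) (𝓝 A)) : 0 ≤ A := by
  refine ge_of_tendsto h ?_
  filter_upwards [self_mem_nhdsWithin] with s (hs : 0 < s)
  positivity

theorem tendsto_rpow_mul_measure_Iic_inv (hμ : ∀ᵐ t ∂μ, 0 ≤ t)
    (hint : ∀ s, 0 < s → Integrable (fun t ↦ exp (-(s * t))) μ) (hα : 0 ≤ α)
    (h : Tendsto (fun s ↦ s ^ α * ∫ t, exp (-(s * t)) ∂μ) (𝓝[>] 0) (𝓝 A)) :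
    Tendsto (fun s : ℝ ↦ .ofReal (s ^ α) * μ (Iic s⁻¹)) (𝓝[>] 0)
      (𝓝 (ENNReal.ofReal A * riemannLiouvilleMeasure α (Iic 1))) := by
  have hA := nonneg_of_tendsto_rpow_mul_integral_exp_neg h
  have hfin (s : Ioi (0 : ℝ)) : IsFiniteMeasure (expImage μ s) :=
    isFiniteMeasure_expImage (hint s s.2)
  have hfin₀ : IsFiniteMeasure (expImage (riemannLiouvilleMeasure α) 1) :=
    isFiniteMeasure_expImage (integrable_exp_neg_mul_riemannLiouvilleMeasure hα one_pos)
  let ν (s : Ioi (0 : ℝ)) : FiniteMeasure ℝ := (s.1 ^ α).toNNReal • ⟨expImage μ s, hfin s⟩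
  let ν₀ : FiniteMeasure ℝ := A.toNNReal • ⟨expImage (riemannLiouvilleMeasure α) 1, hfin₀⟩
  have hν (s : Ioi (0 : ℝ)) :
      (ν s : Measure ℝ) = ENNReal.ofReal (s.1 ^ α) • expImage μ s := rfl
  have hν₀ : (ν₀ : Measure ℝ) =
      ENNReal.ofReal A • expImage (riemannLiouvilleMeasure α) 1 := rfl
  have hweak : Tendsto ν atBot (𝓝 ν₀) := by
    refine tendsto_finiteMeasure_of_tendsto_moments (a := 0) (b := 1)
      (fun s ↦ Measure.ae_smul_measure (ae_mem_Icc_expImage hμ (le_of_lt s.2)) _)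
      (Measure.ae_smul_measure
        (ae_mem_Icc_expImage (ae_nonneg_riemannLiouvilleMeasure α) zero_le_one) _) fun k ↦ ?_
    have hpow (s : Ioi (0 : ℝ)) : 0 ≤ s.1 ^ α := rpow_nonneg (le_of_lt s.2) α
    simp only [hν, hν₀, integral_smul_measure, ENNReal.toReal_ofReal, hA, hpow, smul_eq_mul]
    exact (tendsto_comp_coe_Ioi_atBot (a := (0 : ℝ))).2 (tendsto_rpow_mul_moment_expImage hα h k)
  have hnull : ν₀ (frontier (Ici (exp (-1)))) = 0 := by
    rw [frontier_Ici, FiniteMeasure.null_iff_toMeasure_null, hν₀, Measure.smul_apply,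
      expImage_singleton_exp_neg_one one_ne_zero (by simp [riemannLiouvilleMeasure_singleton]),
      smul_zero]
  have hlim := tendsto_setLIntegral_of_null_frontier hweak truncatedInv measurableSet_Ici hnull
  simp only [hν, hν₀, Measure.restrict_smul, lintegral_smul_measure, smul_eq_mul,
    setLIntegral_truncatedInv_expImage one_pos, inv_one] at hlim
  refine (tendsto_comp_coe_Ioi_atBot (a := (0 : ℝ))).1 (hlim.congr fun s ↦ ?_)
  rw [setLIntegral_truncatedInv_expImage s.2]

theorem karamata_tauberian (hμ : ∀ᵐ t ∂μ, 0 ≤ t)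
    (hint : ∀ s, 0 < s → Integrable (fun t ↦ exp (-(s * t))) μ) (hα : 0 ≤ α)
    (h : Tendsto (fun s ↦ s ^ α * ∫ t, exp (-(s * t)) ∂μ) (𝓝[>] 0) (𝓝 A)) :
    Tendsto (fun x ↦ μ.real (Iic x) / x ^ α) atTop (𝓝 (A / Gamma (α + 1))) := by
  have hA := nonneg_of_tendsto_rpow_mul_integral_exp_neg h
  have hlim := (tendsto_rpow_mul_measure_Iic_inv hμ hint hα h).comp tendsto_inv_atTop_nhdsGT_zero
  rw [riemannLiouvilleMeasure_Iic hα zero_le_one, ← ENNReal.ofReal_mul hA, one_rpow,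
    mul_one_div] at hlim
  have hlim := (ENNReal.tendsto_toReal ENNReal.ofReal_ne_top).comp hlim
  rw [ENNReal.toReal_ofReal (div_nonneg hA (Gamma_pos_of_pos (by positivity)).le)] at hlim
  refine hlim.congr' ?_
  filter_upwards [eventually_ge_atTop 0] with x hx
  simp only [Function.comp_apply, inv_inv, inv_rpow hx, ENNReal.toReal_mul]
  rw [ENNReal.toReal_ofReal (by positivity), measureReal_def]
  ring

end Karamata

section DirichletSeries

variable {ι : Type*} [Countable ι] {b d : ι → ℝ} {α A : ℝ}

theorem tendsto_tsum_indicator_div_rpow (hb : ∀ i, 0 ≤ b i) (hd : ∀ i, 0 ≤ d i)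
    (hsum : ∀ s, 0 < s → Summable fun i ↦ b i * exp (-(s * d i))) (hα : 0 ≤ α)
    (h : Tendsto (fun s ↦ s ^ α * ∑' i, b i * exp (-(s * d i))) (𝓝[>] 0) (𝓝 A)) :
    Tendsto (fun x ↦ (∑' i, {i | d i ≤ x}.indicator b i) / x ^ α) atTop
      (𝓝 (A / Gamma (α + 1))) := by
  let μ : Measure ℝ := .sum fun i ↦ ENNReal.ofReal (b i) • .dirac (d i)
  have hμ : ∀ᵐ t ∂μ, 0 ≤ t :=
    Measure.ae_sum_iff.2 fun i ↦
      Measure.ae_smul_measure ((ae_dirac_iff measurableSet_Ici).2 (hd i)) _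
  have hint (s : ℝ) (hs : 0 < s) : Integrable (fun t ↦ exp (-(s * t))) μ :=
    integrable_sum_dirac (fun _ ↦ ENNReal.ofReal_ne_top) (by simpa [hb] using hsum s hs)
  have hlaplace (s : ℝ) : ∫ t, exp (-(s * t)) ∂μ = ∑' i, b i * exp (-(s * d i)) := by
    simp [μ, integral_sum_dirac, hb]
  have hIic (x : ℝ) : μ.real (Iic x) = ∑' i, {i | d i ≤ x}.indicator b i := by
    have hdirac (i : ι) : (ENNReal.ofReal (b i) • Measure.dirac (d i)) (Iic x) =
        .ofReal ({i | d i ≤ x}.indicator b i) := by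
      by_cases hi : d i ≤ x <;> simp [hi]
    rw [measureReal_def, Measure.sum_apply _ measurableSet_Iic]
    simp only [hdirac]
    rw [ENNReal.tsum_toReal_eq fun i ↦ ENNReal.ofReal_ne_top]
    exact tsum_congr fun i ↦ ENNReal.toReal_ofReal (indicator_nonneg (fun i _ ↦ hb i) i)
  simp only [← hlaplace] at h
  simpa only [hIic] using karamata_tauberian hμ hint hα h

end DirichletSeries

section PowerSeries

lemma tendsto_div_one_sub_exp_neg :
    Tendsto (fun s : ℝ ↦ s / (1 - exp (-s))) (𝓝[>] 0) (𝓝 1) := by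
  have hderiv : HasDerivAt (fun s : ℝ ↦ 1 - exp (-s)) 1 0 := by
    simpa using ((hasDerivAt_neg (0 : ℝ)).exp).const_sub 1
  simpa [← div_eq_inv_mul] using hderiv.tendsto_slope_zero_right.inv₀ one_ne_zero

lemma tendsto_exp_neg_nhdsLT_one :
    Tendsto (fun s : ℝ ↦ exp (-s)) (𝓝[>] 0) (𝓝[<] 1) := by
  refine tendsto_nhdsWithin_iff.2 ⟨?_, ?_⟩
  · exact ((by fun_prop : Continuous fun s : ℝ ↦ exp (-s)).tendsto' 0 1 (by simp)).mono_left
      nhdsWithin_le_nhds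
  · filter_upwards [self_mem_nhdsWithin] with s (hs : 0 < s)
    simpa using hs

lemma tendsto_rpow_mul_comp_exp_neg {F : ℝ → ℝ} {α A : ℝ}
    (h : Tendsto (fun x ↦ (1 - x) ^ α * F x) (𝓝[<] 1) (𝓝 A)) :
    Tendsto (fun s ↦ s ^ α * F (exp (-s))) (𝓝[>] 0) (𝓝 A) := by
  have hratio := tendsto_div_one_sub_exp_neg.rpow_const (p := α) (.inl one_ne_zero)
  have hlim := hratio.mul (h.comp tendsto_exp_neg_nhdsLT_one)
  rw [one_rpow, one_mul] at hlim
  refine hlim.congr' ?_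
  filter_upwards [self_mem_nhdsWithin] with s (hs : 0 < s)
  have hexp : 0 < 1 - exp (-s) := by simpa using hs
  rw [Function.comp_apply, ← mul_assoc, ← mul_rpow (by positivity) hexp.le,
    div_mul_cancel₀ _ hexp.ne']

theorem tendsto_sum_Icc_div_rpow {a : ℕ → ℝ} {α A : ℝ} (ha : ∀ n, 1 ≤ n → 0 ≤ a n)
    (hsum : ∀ x ∈ Ioo (0 : ℝ) 1, Summable fun n : ℕ ↦ a (n + 1) * x ^ (n + 1)) (hα : 0 ≤ α)
    (h : Tendsto (fun x : ℝ ↦ (1 - x) ^ α * ∑' n : ℕ, a (n + 1) * x ^ (n + 1)) (𝓝[<] 1) (𝓝 A)) :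
    Tendsto (fun n : ℕ ↦ (∑ k ∈ Finset.Icc 1 n, a k) / (n : ℝ) ^ α) atTop
      (𝓝 (A / Gamma (α + 1))) := by
  have hexp (s : ℝ) (n : ℕ) : exp (-s) ^ (n + 1) = exp (-(s * (n + 1))) := by
    rw [← exp_nat_mul]
    push_cast
    ring_nf
  have hlaplace := tendsto_rpow_mul_comp_exp_neg h
  simp only [hexp] at hlaplace
  have hsum_exp (s : ℝ) (hs : 0 < s) : Summable fun n : ℕ ↦ a (n + 1) * exp (-(s * (n + 1))) := by
    simpa only [hexp] using hsum (exp (-s)) ⟨exp_pos _, by simpa using hs⟩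
  have hpartial (N : ℕ) : ∑' n, {n : ℕ | (n + 1 : ℝ) ≤ N}.indicator (fun n ↦ a (n + 1)) n =
      ∑ k ∈ Finset.Icc 1 N, a k := by
    have hmem : {n : ℕ | (n + 1 : ℝ) ≤ N} = Finset.range N := by
      ext n
      simp only [mem_ofPred_eq, Finset.coe_range, mem_Iio]
      norm_cast
    rw [hmem, ← sum_eq_tsum_indicator, Finset.range_eq_Ico, Finset.sum_Ico_add' a 0 N 1]
    rfl
  have hlim := (tendsto_tsum_indicator_div_rpow (fun n ↦ ha (n + 1) n.succ_pos)
    (fun n ↦ by positivity) hsum_exp hα hlaplace).comp tendsto_natCast_atTop_atTop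
  exact hlim.congr fun N ↦ by rw [Function.comp_apply, hpartial]

end PowerSeries

theorem hardy_littlewood_tauberian (a : ℕ → ℝ) (hpos : ∀ n, 1 ≤ n → 0 ≤ a n)
    (hconv : ∀ x : ℝ, |x| < 1 → Summable (fun n : ℕ => a (n+1) * x ^ (n+1)))
    (α A : ℝ) (hα : 0 ≤ α) (hA : 0 ≤ A)
    (hasymp : Tendsto (fun x : ℝ => (∑' n : ℕ, a (n+1) * x ^ (n+1)) / (A / (1-x) ^ α))
      (nhdsWithin 1 (Set.Iio 1)) (nhds 1)) :
    Tendsto (fun n : ℕ => (∑ k ∈ Finset.Icc 1 n, a k) / (A / Real.Gamma (α+1) * (n:ℝ) ^ α))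
      atTop (nhds 1) := by
  have hA0 : A ≠ 0 := by
    rintro rfl
    simp [tendsto_const_nhds_iff] at hasymp
  have hC : A / Gamma (α + 1) ≠ 0 := div_ne_zero hA0 (Gamma_pos_of_pos (by positivity)).ne'
  have habel : Tendsto (fun x : ℝ ↦ (1 - x) ^ α * ∑' n : ℕ, a (n + 1) * x ^ (n + 1))
      (𝓝[<] 1) (𝓝 A) := by
    rw [← mul_one A]
    refine (hasymp.const_mul A).congr fun x ↦ ?_
    field_simp
  have hsum (x : ℝ) (hx : x ∈ Ioo 0 1) := hconv x (abs_lt.2 ⟨by linarith [hx.1], hx.2⟩)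
  have hsums := (tendsto_sum_Icc_div_rpow hpos hsum hα habel).div_const (A / Gamma (α + 1))
  rw [div_self hC] at hsums
  exact hsums.congr fun n ↦ by rw [div_div, mul_comm]
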